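/- Let X₀ be a proper subshift of X = 𝒜^(ℤ^d) and let φ : X → ℝ be a continuous potential such that: (1) φ = 0 on X₀ and φ(x) < 0 for all x ∉ X₀; (2) p_φ(1) = h_top(X₀); (3) ES(φ) (equilibrium states at β = 1) is exactly the set of measures of maximal entropy on X₀. Then there exists β_c ∈ (0,1] such that φ has a freezing phase transition at β_c; for every β > β_c, ES(βφ) equals the set of measures of maximal entropy on X₀; and for every β < β_c, every μ ∈ ES(βφ) satisfies μ(X₀) = 0. -/

import Mathlib

open MeasureTheory Filter Topology
open scoped ENNReal Classical

namespace Freezing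

/-- The configuration space `X = 𝒜^(ℤ^d)`. -/
abbrev Cfg (d : ℕ) (A : Type) : Type := (Fin d → ℤ) → A

section Defs

variable {d : ℕ} {A : Type} [Fintype A] [TopologicalSpace A] [DiscreteTopology A]
  [MeasurableSpace A] [BorelSpace A]

/-- The shift action: `(σ^n x)_m = x_{n+m}`. -/
def shift (n : Fin d → ℤ) (x : Cfg d A) : Cfg d A := fun m => x (n + m)

/-- Shift-invariance of a measure. -/
def Invariant (μ : Measure (Cfg d A)) : Prop :=
  ∀ n : Fin d → ℤ, Measure.map (shift n) μ = μ

/-- Cylinder set `[w]` for a pattern `w` on `E_n = ([0,n-1] ∩ ℤ)^d`. -/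
def cylE (n : ℕ) (w : (Fin d → Fin n) → A) : Set (Cfg d A) :=
  { x | ∀ m : Fin d → Fin n, x (fun i => ((m i : ℕ) : ℤ)) = w m }

/-- Measure-theoretic entropy `h(μ) = inf_{n ≥ 1} n^{-d} Σ_w (-μ[w] log μ[w])`. -/
noncomputable def entropy (μ : Measure (Cfg d A)) : ℝ :=
  ⨅ n : {n : ℕ // 1 ≤ n},
    ((n.1 : ℝ) ^ d)⁻¹ *
      ∑ w : (Fin d → Fin n.1) → A, Real.negMulLog (μ (cylE n.1 w)).toReal

/-- Pressure `p_φ(β) = sup { h(μ) + β ∫ φ dμ }` over shift-invariant probability measures. -/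
noncomputable def pressure (φ : Cfg d A → ℝ) (β : ℝ) : ℝ :=
  sSup { r | ∃ μ : Measure (Cfg d A), IsProbabilityMeasure μ ∧ Invariant μ ∧
    r = entropy μ + β * ∫ x, φ x ∂μ }

/-- The set of equilibrium states of `βφ`. -/
def ES (φ : Cfg d A → ℝ) (β : ℝ) : Set (Measure (Cfg d A)) :=
  { μ | IsProbabilityMeasure μ ∧ Invariant μ ∧
      entropy μ + β * ∫ x, φ x ∂μ = pressure φ β }

/-- `φ` has a freezing phase transition at `βc`. -/
def FreezingPT (φ : Cfg d A → ℝ) (βc : ℝ) : Prop :=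
  (∀ β β' : ℝ, βc < β → βc < β' → ES φ β = ES φ β') ∧
  (∀ β β' : ℝ, β < βc → βc < β' → ES φ β ≠ ES φ β')

/-- `s_φ = sup { ∫ φ dμ }` over shift-invariant probability measures. -/
noncomputable def sPhi (φ : Cfg d A → ℝ) : ℝ :=
  sSup { r | ∃ μ : Measure (Cfg d A), IsProbabilityMeasure μ ∧ Invariant μ ∧
    r = ∫ x, φ x ∂μ }

/-- The set of maximizing measures of `φ`. -/
def MM (φ : Cfg d A → ℝ) : Set (Measure (Cfg d A)) :=
  { μ | IsProbabilityMeasure μ ∧ Invariant μ ∧ (∫ x, φ x ∂μ) = sPhi φ }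

/-- `h_φ = sup { h(η) : η ∈ MM(φ) }`. -/
noncomputable def hPhi (φ : Cfg d A → ℝ) : ℝ :=
  sSup { r | ∃ μ ∈ MM φ, r = entropy μ }

/-- The zero-temperature accumulation points of `φ`. -/
def ZTA (φ : Cfg d A → ℝ) : Set (Measure (Cfg d A)) :=
  { μ | IsProbabilityMeasure μ ∧ Invariant μ ∧
      ∃ (β : ℕ → ℝ) (μs : ℕ → Measure (Cfg d A)),
        Tendsto β atTop atTop ∧ (∀ k, μs k ∈ ES φ (β k)) ∧
        ∀ f : Cfg d A → ℝ, Continuous f →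
          Tendsto (fun k => ∫ x, f x ∂(μs k)) atTop (𝓝 (∫ x, f x ∂μ)) }

/-- A subshift: nonempty, closed, invariant under every shift. -/
def IsSubshift (X₀ : Set (Cfg d A)) : Prop :=
  X₀.Nonempty ∧ IsClosed X₀ ∧ ∀ n : Fin d → ℤ, ∀ x ∈ X₀, shift n x ∈ X₀

/-- The language `L_{E_n}(X₀)`: patterns on `E_n` appearing at the origin of points of `X₀`. -/
def langE (X₀ : Set (Cfg d A)) (n : ℕ) : Set ((Fin d → Fin n) → A) :=
  { w | ∃ x ∈ X₀, ∀ m : Fin d → Fin n, x (fun i => ((m i : ℕ) : ℤ)) = w m }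

/-- Topological entropy `h_top(X₀) = inf_{n ≥ 1} n^{-d} log |L_{E_n}(X₀)|`. -/
noncomputable def topEnt (X₀ : Set (Cfg d A)) : ℝ :=
  ⨅ n : {n : ℕ // 1 ≤ n}, ((n.1 : ℝ) ^ d)⁻¹ * Real.log ((langE X₀ n.1).ncard)

/-- A measure of maximal entropy on the subshift `X₀`. -/
def IsMME (X₀ : Set (Cfg d A)) (μ : Measure (Cfg d A)) : Prop :=
  IsProbabilityMeasure μ ∧ Invariant μ ∧ μ X₀ = 1 ∧ entropy μ = topEnt X₀

/-- Ergodicity: invariant Borel sets have measure `0` or `1`. -/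
def ErgodicInv (μ : Measure (Cfg d A)) : Prop :=
  ∀ s : Set (Cfg d A), MeasurableSet s → (∀ n : Fin d → ℤ, shift n ⁻¹' s = s) →
    μ s = 0 ∨ μ s = 1

/-- The `n`-th variation `var_n φ`, over pairs agreeing on `B_n = ([-n,n] ∩ ℤ)^d`. -/
noncomputable def varPot (φ : Cfg d A → ℝ) (n : ℕ) : ℝ :=
  sSup { r | ∃ x y : Cfg d A,
    (∀ m : Fin d → ℤ, (∀ i, |m i| ≤ (n : ℤ)) → x m = y m) ∧ r = |φ x - φ y| }

/-- Sup-norm `‖m‖_∞` of a site `m ∈ ℤ^d`. -/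
def supNorm (m : Fin d → ℤ) : ℕ := Finset.univ.sup fun i => (m i).natAbs

/-- The metric `dist(x,y) = 2^{-min{‖n‖_∞ : x_n ≠ y_n}}`. -/
noncomputable def cfgDist (x y : Cfg d A) : ℝ :=
  if x = y then 0
  else (2 : ℝ) ^
    (-((sInf { k : ℕ | ∃ m : Fin d → ℤ, supNorm m = k ∧ x m ≠ y m } : ℕ) : ℤ))

/-- Distance from a point to a subshift. -/
noncomputable def distToSub (X₀ : Set (Cfg d A)) (x : Cfg d A) : ℝ :=
  sInf { r | ∃ y ∈ X₀, r = cfgDist x y }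

end Defs

set_option linter.unusedSectionVars false
set_option linter.unusedSimpArgs false

section Aux

variable {d : ℕ} {A : Type} [Fintype A] [TopologicalSpace A] [DiscreteTopology A]
  [MeasurableSpace A] [BorelSpace A]

/-- Restriction of a configuration to `E_n`. -/
def patE (n : ℕ) (x : Cfg d A) : (Fin d → Fin n) → A := fun m => x (fun i => ((m i : ℕ) : ℤ))

lemma cylE_eq (n : ℕ) (w : (Fin d → Fin n) → A) : cylE n w = patE n ⁻¹' {w} := by
  ext x
  simp only [cylE, patE, Set.mem_ofPred_eq, Set.mem_preimage, Set.mem_singleton_iff]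
  exact ⟨fun h => funext h, fun h m => congrFun h m⟩

lemma measurable_patE (n : ℕ) : Measurable (patE n : Cfg d A → _) :=
  measurable_pi_lambda _ fun _ => measurable_pi_apply _

lemma continuous_patE (n : ℕ) : Continuous (patE n : Cfg d A → _) :=
  continuous_pi fun _ => continuous_apply _

lemma isClopen_cylE (n : ℕ) (w : (Fin d → Fin n) → A) : IsClopen (cylE n w) := by
  rw [cylE_eq]
  exact (isClopen_discrete {w}).preimage (continuous_patE n)

lemma measurableSet_cylE (n : ℕ) (w : (Fin d → Fin n) → A) : MeasurableSet (cylE n w) :=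
  (isClopen_cylE n w).2.measurableSet

lemma measurable_shift (n : Fin d → ℤ) : Measurable (shift n : Cfg d A → Cfg d A) :=
  measurable_pi_lambda _ fun _ => measurable_pi_apply _

lemma continuous_shift (n : Fin d → ℤ) : Continuous (shift n : Cfg d A → Cfg d A) :=
  continuous_pi fun _ => continuous_apply _

lemma integral_comp_fin {Ω ι : Type*} [MeasurableSpace Ω] [Fintype ι] [MeasurableSpace ι]
    [MeasurableSingletonClass ι] (μ : Measure Ω) [IsProbabilityMeasure μ] (f : Ω → ι)
    (hf : Measurable f) (g : ι → ℝ) :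
    ∫ x, g (f x) ∂μ = ∑ i, μ.real (f ⁻¹' {i}) * g i := by
  have : IsProbabilityMeasure (μ.map f) := Measure.isProbabilityMeasure_map hf.aemeasurable
  rw [← integral_map (f := g) hf.aemeasurable (Measurable.of_discrete.aestronglyMeasurable),
    integral_fintype Integrable.of_finite]
  simp [map_measureReal_apply hf (MeasurableSet.singleton _)]

lemma sum_fin_one {Ω ι : Type*} [MeasurableSpace Ω] [Fintype ι] [MeasurableSpace ι]
    [MeasurableSingletonClass ι] (μ : Measure Ω) [IsProbabilityMeasure μ] (f : Ω → ι)
    (hf : Measurable f) : ∑ i, μ.real (f ⁻¹' {i}) = 1 := by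
  have := integral_comp_fin μ f hf (fun _ => 1)
  simpa using this.symm

lemma gibbs {ι : Type*} [Fintype ι] (p q : ι → ℝ) (hp : ∀ i, 0 ≤ p i) (hq : ∀ i, 0 ≤ q i)
    (hsum : ∑ i, q i ≤ ∑ i, p i) (hac : ∀ i, q i = 0 → p i = 0) :
    ∑ i, Real.negMulLog (p i) ≤ ∑ i, -(p i * Real.log (q i)) := by
  have key : ∀ i, Real.negMulLog (p i) ≤ -(p i * Real.log (q i)) + (q i - p i) := by
    intro i
    rcases (hp i).eq_or_lt with h | h
    · rw [← h]; simpa using hq i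
    · have hq' : 0 < q i := lt_of_le_of_ne (hq i) fun h0 => h.ne' (hac i h0.symm)
      have := Real.log_le_sub_one_of_pos (div_pos hq' h)
      rw [Real.log_div hq'.ne' h.ne'] at this
      have h2 := mul_le_mul_of_nonneg_left this h.le
      have h3 : p i * (q i / p i - 1) = q i - p i := by field_simp
      rw [h3] at h2
      unfold Real.negMulLog
      linarith
  calc _ ≤ ∑ i, (-(p i * Real.log (q i)) + (q i - p i)) := Finset.sum_le_sum fun i _ => key i
    _ = ∑ i, -(p i * Real.log (q i)) + (∑ i, q i - ∑ i, p i) := by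
        rw [Finset.sum_add_distrib, Finset.sum_sub_distrib]
    _ ≤ _ := by linarith

/-- Shannon entropy of the `E_n` marginal. -/
noncomputable def HE (μ : Measure (Cfg d A)) (n : ℕ) : ℝ :=
  ∑ w : (Fin d → Fin n) → A, Real.negMulLog (μ (cylE n w)).toReal

lemma negMulLog_meas_nonneg {μ : Measure (Cfg d A)} [IsProbabilityMeasure μ] (s : Set (Cfg d A)) :
    0 ≤ Real.negMulLog (μ s).toReal :=
  Real.negMulLog_nonneg ENNReal.toReal_nonneg (measureReal_le_one (μ := μ))

lemma HE_nonneg (μ : Measure (Cfg d A)) [IsProbabilityMeasure μ] (n : ℕ) : 0 ≤ HE μ n :=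
  Finset.sum_nonneg fun _ _ => negMulLog_meas_nonneg _

lemma bddBelow_ent (μ : Measure (Cfg d A)) [IsProbabilityMeasure μ] :
    BddBelow (Set.range fun n : {n : ℕ // 1 ≤ n} => ((n.1 : ℝ) ^ d)⁻¹ * HE μ n.1) := by
  refine ⟨0, ?_⟩
  rintro _ ⟨n, rfl⟩
  exact mul_nonneg (by positivity) (HE_nonneg μ _)

lemma entropy_eq (μ : Measure (Cfg d A)) :
    entropy μ = ⨅ n : {n : ℕ // 1 ≤ n}, ((n.1 : ℝ) ^ d)⁻¹ * HE μ n.1 := rfl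

lemma entropy_le (μ : Measure (Cfg d A)) [IsProbabilityMeasure μ] (n : ℕ) (hn : 1 ≤ n) :
    entropy μ ≤ ((n : ℝ) ^ d)⁻¹ * HE μ n :=
  ciInf_le (bddBelow_ent μ) ⟨n, hn⟩

/-- blocks -/
def blkEquiv (d k n : ℕ) : ((Fin d → Fin k) × (Fin d → Fin n)) ≃ (Fin d → Fin (k * n)) where
  toFun b := fun i => finProdFinEquiv (b.1 i, b.2 i)
  invFun c := (fun i => (finProdFinEquiv.symm (c i)).1, fun i => (finProdFinEquiv.symm (c i)).2)
  left_inv b := by simp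
  right_inv c := funext fun i => finProdFinEquiv.apply_symm_apply (c i)

def blkShift {d k : ℕ} (n : ℕ) (b : Fin d → Fin k) : Fin d → ℤ := fun i => (n : ℤ) * ((b i : ℕ) : ℤ)

def blkPat (k n : ℕ) (x : Cfg d A) : (Fin d → Fin k) → (Fin d → Fin n) → A :=
  fun b => patE n (shift (blkShift n b) x)

def blkW (d k n : ℕ) (A : Type) :
    ((Fin d → Fin k) → (Fin d → Fin n) → A) ≃ ((Fin d → Fin (k * n)) → A) :=
  (Equiv.curry _ _ _).symm.trans (Equiv.arrowCongr (blkEquiv d k n) (Equiv.refl A))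

lemma blkW_blkPat (k n : ℕ) (x : Cfg d A) : blkW d k n A (blkPat k n x) = patE (k * n) x := by
  rw [← Equiv.eq_symm_apply]
  funext b m
  simp only [blkW, Equiv.symm_trans_apply, Equiv.symm_symm, Equiv.arrowCongr_symm,
    Equiv.curry_apply, Function.curry, Equiv.arrowCongr_apply, Function.comp, Equiv.refl_symm,
    Equiv.refl_apply, blkPat, patE, shift, blkShift, blkEquiv, Equiv.coe_fn_mk, Equiv.symm_symm]
  congr 1
  funext i
  simp [finProdFinEquiv, add_comm, blkShift]

lemma HE_mul_le (μ : Measure (Cfg d A)) [IsProbabilityMeasure μ] (hμ : Invariant μ) (k n : ℕ) :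
    HE μ (k * n) ≤ (k : ℝ) ^ d * HE μ n := by
  have hmeas : Measurable (blkPat k n : Cfg d A → _) :=
    measurable_pi_lambda _ fun b => (measurable_patE n).comp (measurable_shift _)
  have hp : ∀ v, cylE (k * n) (blkW d k n A v) = blkPat k n ⁻¹' {v} := by
    intro v
    rw [cylE_eq]
    ext x
    simp only [Set.mem_preimage, Set.mem_singleton_iff, ← blkW_blkPat, Equiv.apply_eq_iff_eq]
  have hinv : ∀ (b : Fin d → Fin k) (s : Set (Cfg d A)), MeasurableSet s →
      μ.real (shift (blkShift n b) ⁻¹' s) = μ.real s := by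
    intro b s hs
    rw [← map_measureReal_apply (measurable_shift _) hs, hμ]
  have h1 : HE μ (k * n) = ∑ v, Real.negMulLog (μ.real (blkPat k n ⁻¹' {v})) := by
    unfold HE
    rw [← (blkW d k n A).sum_comp]
    simp only [hp]
    rfl
  have hsumu : ∑ u : (Fin d → Fin n) → A, μ.real (cylE n u) = 1 := by
    simp only [cylE_eq]
    exact sum_fin_one μ _ (measurable_patE n)
  have hm : ∀ (b : Fin d → Fin k),
      ∑ v, μ.real (blkPat k n ⁻¹' {v}) * Real.log (μ.real (cylE n (v b))) = - HE μ n := by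
    intro b
    rw [← integral_comp_fin μ _ hmeas (fun v => Real.log (μ.real (cylE n (v b))))]
    have : ∫ x, Real.log (μ.real (cylE n (blkPat k n x b))) ∂μ
        = ∫ y, Real.log (μ.real (cylE n (patE n y))) ∂(μ.map (shift (blkShift n b))) := by
      rw [integral_map (measurable_shift _).aemeasurable]
      · rfl
      · exact ((Measurable.of_discrete (f := fun u : (Fin d → Fin n) → A =>
          Real.log (μ.real (cylE n u)))).comp (measurable_patE n)).aestronglyMeasurable
    rw [this, hμ, integral_comp_fin μ _ (measurable_patE n) (fun u => Real.log (μ.real (cylE n u)))]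
    simp only [← cylE_eq, HE, Real.negMulLog, ← Finset.sum_neg_distrib, neg_mul, neg_neg]
    rfl
  rw [h1]
  refine (gibbs _ (fun v => ∏ b, μ.real (cylE n (v b))) (fun _ => measureReal_nonneg)
    (fun _ => Finset.prod_nonneg fun _ _ => measureReal_nonneg) ?_ ?_).trans ?_
  · rw [sum_fin_one μ _ hmeas]
    have := Fintype.prod_sum (fun (_ : Fin d → Fin k) (u : (Fin d → Fin n) → A) => μ.real (cylE n u))
    rw [← this]
    simp [hsumu]
  · intro v hv
    obtain ⟨b, -, hb⟩ := Finset.prod_eq_zero_iff.1 hv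
    refine le_antisymm ?_ measureReal_nonneg
    rw [← hb, ← hinv b _ (measurableSet_cylE n _)]
    refine measureReal_mono ?_
    intro x hx
    simp only [Set.mem_preimage, Set.mem_singleton_iff] at hx
    rw [← hx, cylE_eq]
    rfl
  · have hlog : ∀ v, -(μ.real (blkPat k n ⁻¹' {v}) * Real.log (∏ b, μ.real (cylE n (v b))))
        = - ∑ b, μ.real (blkPat k n ⁻¹' {v}) * Real.log (μ.real (cylE n (v b))) := by
      intro v
      by_cases h0 : ∃ b, μ.real (cylE n (v b)) = 0
      · obtain ⟨b, hb⟩ := h0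
        have : μ.real (blkPat k n ⁻¹' {v}) = 0 := by
          refine le_antisymm ?_ measureReal_nonneg
          rw [← hb, ← hinv b _ (measurableSet_cylE n _)]
          refine measureReal_mono ?_
          intro x hx
          simp only [Set.mem_preimage, Set.mem_singleton_iff] at hx
          rw [← hx, cylE_eq]
          rfl
        simp [this]
      · push Not at h0
        rw [Real.log_prod (fun b _ => h0 b), Finset.mul_sum]
    simp only [hlog]
    rw [Finset.sum_neg_distrib, Finset.sum_comm]
    simp only [hm]
    simp

lemma negMulLog_add_le {x y : ℝ} (hx : 0 ≤ x) (hy : 0 ≤ y) :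
    Real.negMulLog (x + y) ≤ Real.negMulLog x + Real.negMulLog y := by
  rcases hx.eq_or_lt with rfl | hx
  · simp
  rcases hy.eq_or_lt with rfl | hy
  · simp
  unfold Real.negMulLog
  have h1 := mul_le_mul_of_nonneg_left (Real.log_le_log hx (by linarith : x ≤ x + y)) hx.le
  have h2 := mul_le_mul_of_nonneg_left (Real.log_le_log hy (by linarith : y ≤ x + y)) hy.le
  nlinarith

lemma HE_mix (μ ν₀ ν₁ : Measure (Cfg d A)) [IsProbabilityMeasure μ] [IsProbabilityMeasure ν₀]
    [IsProbabilityMeasure ν₁] (t : ℝ) (h0 : 0 ≤ t) (ht1 : t ≤ 1)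
    (h : ∀ s, MeasurableSet s → μ.real s = t * ν₀.real s + (1 - t) * ν₁.real s) (n : ℕ) :
    HE μ n ≤ t * HE ν₀ n + (1 - t) * HE ν₁ n + (Real.negMulLog t + Real.negMulLog (1 - t)) := by
  have hs : ∀ ν : Measure (Cfg d A), IsProbabilityMeasure ν →
      ∑ u : (Fin d → Fin n) → A, ν.real (cylE n u) = 1 := by
    intro ν _
    simp only [cylE_eq]
    exact sum_fin_one ν _ (measurable_patE n)
  have key : ∀ w : (Fin d → Fin n) → A, Real.negMulLog (μ.real (cylE n w)) ≤
      t * Real.negMulLog (ν₀.real (cylE n w)) + (1 - t) * Real.negMulLog (ν₁.real (cylE n w)) +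
      (ν₀.real (cylE n w) * Real.negMulLog t + ν₁.real (cylE n w) * Real.negMulLog (1 - t)) := by
    intro w
    rw [h _ (measurableSet_cylE n w)]
    refine (negMulLog_add_le (mul_nonneg h0 measureReal_nonneg)
      (mul_nonneg (by linarith) measureReal_nonneg)).trans ?_
    rw [Real.negMulLog_mul, Real.negMulLog_mul]
    linarith
  refine (Finset.sum_le_sum fun w _ => key w).trans (le_of_eq ?_)
  simp only [Finset.sum_add_distrib, ← Finset.mul_sum, ← Finset.sum_mul, hs ν₀ inferInstance,
    hs ν₁ inferInstance, one_mul]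
  rfl

lemma entropy_mix (hd : 1 ≤ d) (μ ν₀ ν₁ : Measure (Cfg d A)) [IsProbabilityMeasure μ]
    [IsProbabilityMeasure ν₀] [IsProbabilityMeasure ν₁] (hν₀ : Invariant ν₀) (hν₁ : Invariant ν₁)
    (t : ℝ) (h0 : 0 ≤ t) (ht1 : t ≤ 1)
    (h : ∀ s, MeasurableSet s → μ.real s = t * ν₀.real s + (1 - t) * ν₁.real s) :
    entropy μ ≤ t * entropy ν₀ + (1 - t) * entropy ν₁ := by
  have hne : Nonempty {n : ℕ // 1 ≤ n} := ⟨⟨1, le_rfl⟩⟩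
  have hdec : ∀ ν : Measure (Cfg d A), IsProbabilityMeasure ν → Invariant ν → ∀ k n : ℕ, 1 ≤ k →
      1 ≤ n → (((k * n : ℕ) : ℝ) ^ d)⁻¹ * HE ν (k * n) ≤ ((n : ℝ) ^ d)⁻¹ * HE ν n := by
    intro ν _ hν k n hk hn
    have hk' : (0 : ℝ) < k := by exact_mod_cast hk
    have hn' : (0 : ℝ) < n := by exact_mod_cast hn
    refine (mul_le_mul_of_nonneg_left (HE_mul_le ν hν k n) (by positivity)).trans (le_of_eq ?_)
    push_cast
    rw [mul_pow]
    field_simp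
  refine le_of_forall_pos_le_add fun ε hε => ?_
  obtain ⟨⟨n₀, hn₀⟩, hlt₀⟩ := exists_lt_of_ciInf_lt
    (show (⨅ n : {n : ℕ // 1 ≤ n}, ((n.1 : ℝ) ^ d)⁻¹ * HE ν₀ n.1) < entropy ν₀ + ε / 2 by
      rw [← entropy_eq]; linarith)
  obtain ⟨⟨n₁, hn₁⟩, hlt₁⟩ := exists_lt_of_ciInf_lt
    (show (⨅ n : {n : ℕ // 1 ≤ n}, ((n.1 : ℝ) ^ d)⁻¹ * HE ν₁ n.1) < entropy ν₁ + ε / 2 by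
      rw [← entropy_eq]; linarith)
  simp only at hlt₀ hlt₁
  set C := Real.negMulLog t + Real.negMulLog (1 - t) with hC
  have hC0 : 0 ≤ C := add_nonneg (Real.negMulLog_nonneg h0 ht1)
    (Real.negMulLog_nonneg (by linarith) (by linarith))
  obtain ⟨k, hk⟩ := exists_nat_gt (C / (ε / 2))
  have hk0 : (0 : ℝ) < k := lt_of_le_of_lt (by positivity) hk
  have hk1 : 1 ≤ k := by exact_mod_cast hk0
  set N := k * (n₀ * n₁) with hN
  have hn01 : 1 ≤ n₀ * n₁ := Nat.mul_pos hn₀ hn₁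
  have hN1 : 1 ≤ N := Nat.mul_pos hk1 hn01
  have hkN : k ≤ N ^ d := (Nat.le_mul_of_pos_right k hn01).trans (Nat.le_self_pow (by omega) N)
  have hkN' : (k : ℝ) ≤ (N : ℝ) ^ d := by exact_mod_cast hkN
  have hCN : ((N : ℝ) ^ d)⁻¹ * C ≤ ε / 2 := by
    rw [div_lt_iff₀ (by positivity)] at hk
    rw [inv_mul_le_iff₀ (by linarith)]
    nlinarith
  have e0 : ((N : ℝ) ^ d)⁻¹ * HE ν₀ N ≤ ((n₀ : ℝ) ^ d)⁻¹ * HE ν₀ n₀ := by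
    have := hdec ν₀ inferInstance hν₀ (k * n₁) n₀ (Nat.mul_pos hk1 hn₁) hn₀
    rwa [show k * n₁ * n₀ = N by rw [hN]; ring] at this
  have e1 : ((N : ℝ) ^ d)⁻¹ * HE ν₁ N ≤ ((n₁ : ℝ) ^ d)⁻¹ * HE ν₁ n₁ := by
    have := hdec ν₁ inferInstance hν₁ (k * n₀) n₁ (Nat.mul_pos hk1 hn₀) hn₁
    rwa [show k * n₀ * n₁ = N by rw [hN]; ring] at this
  have hm := (entropy_le μ N hN1).trans
    (mul_le_mul_of_nonneg_left (HE_mix μ ν₀ ν₁ t h0 ht1 h N)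
      (by positivity : (0 : ℝ) ≤ ((N : ℝ) ^ d)⁻¹))
  have a0 := mul_le_mul_of_nonneg_left (e0.trans hlt₀.le) h0
  have a1 := mul_le_mul_of_nonneg_left (e1.trans hlt₁.le) (sub_nonneg.2 ht1)
  nlinarith

/-- The uniform Bernoulli measure. -/
noncomputable def bern (d : ℕ) (A : Type) [Fintype A] [MeasurableSpace A] [Nonempty A] :
    Measure (Cfg d A) :=
  Measure.infinitePi (fun _ : Fin d → ℤ => (PMF.uniformOfFintype A).toMeasure)

instance [Nonempty A] : IsProbabilityMeasure (bern d A) := by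
  unfold bern; infer_instance

lemma bern_invariant [Nonempty A] : Invariant (bern d A) := by
  intro n
  have h := Measure.infinitePi_map_piCongrLeft
    (fun _ : Fin d → ℤ => (PMF.uniformOfFintype A).toMeasure) (Equiv.addLeft (-n))
  have h2 : (shift n : Cfg d A → Cfg d A) =
      ⇑(MeasurableEquiv.piCongrLeft (fun _ : Fin d → ℤ => A) (Equiv.addLeft (-n))) := by
    funext x m
    obtain ⟨a, rfl⟩ := (Equiv.addLeft (-n)).surjective m
    rw [MeasurableEquiv.coe_piCongrLeft, Equiv.piCongrLeft_apply_apply]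
    simp [shift]
  rw [h2]
  exact h

lemma bern_cylE [Nonempty A] (n : ℕ) (w : (Fin d → Fin n) → A) :
    (bern d A (cylE n w)).toReal = ((Fintype.card A : ℝ) ^ (n ^ d))⁻¹ := by
  set j : (Fin d → Fin n) → (Fin d → ℤ) := fun m i => ((m i : ℕ) : ℤ) with hj
  have hinj : Function.Injective j := by
    intro a b hab
    funext i
    have := congrFun hab i
    simp only [hj] at this
    exact Fin.ext (by exact_mod_cast this)
  set t : (Fin d → ℤ) → Set A := Function.extend j (fun m => {w m}) (fun _ => Set.univ) with ht
  have htj : ∀ m, t (j m) = {w m} := fun m => hinj.extend_apply _ _ m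
  have hs : cylE n w = Set.pi ((Finset.univ.image j : Finset (Fin d → ℤ)) : Set (Fin d → ℤ)) t := by
    ext x
    simp only [Set.mem_pi, Finset.coe_image, Finset.coe_univ, Set.image_univ, Set.mem_range,
      forall_exists_index, forall_apply_eq_imp_iff, htj, Set.mem_singleton_iff]
    rfl
  rw [hs, bern, Measure.infinitePi_pi]
  · rw [Finset.prod_image (fun a _ b _ h => hinj h)]
    simp only [htj]
    simp [PMF.toMeasure_apply_singleton]
  · intro i _
    exact MeasurableSet.of_discrete

lemma bern_entropy [Nonempty A] : entropy (bern d A) = Real.log (Fintype.card A) := by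
  have hne : Nonempty {n : ℕ // 1 ≤ n} := ⟨⟨1, le_rfl⟩⟩
  have hA : (0 : ℝ) < Fintype.card A := by exact_mod_cast Fintype.card_pos
  have : ∀ n : {n : ℕ // 1 ≤ n}, ((n.1 : ℝ) ^ d)⁻¹ * HE (bern d A) n.1
      = Real.log (Fintype.card A) := by
    intro ⟨n, hn⟩
    have hn' : (0 : ℝ) < n := by exact_mod_cast hn
    simp only [HE, bern_cylE, Real.negMulLog, Real.log_inv, Real.log_pow, Finset.sum_const,
      Finset.card_univ, Fintype.card_fun, Fintype.card_fin, nsmul_eq_mul]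
    push_cast
    field_simp
  rw [entropy_eq]
  simp only [this, ciInf_const]

lemma topEnt_lt (X₀ : Set (Cfg d A)) (hsub : IsSubshift X₀) (hproper : X₀ ≠ Set.univ) :
    topEnt X₀ < Real.log (Fintype.card A) := by
  obtain ⟨⟨x₀, hx₀⟩, hcl, hsh⟩ := hsub
  have hA : Nonempty A := ⟨x₀ 0⟩
  have hApos : (0 : ℝ) < Fintype.card A := by exact_mod_cast Fintype.card_pos
  obtain ⟨x, hx⟩ := (Set.ne_univ_iff_exists_notMem X₀).1 hproper
  obtain ⟨I, u, hu, hsubs⟩ := isOpen_pi_iff.1 hcl.isOpen_compl x hx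
  -- a bound for the sites of `I`
  obtain ⟨M, hM⟩ : ∃ M : ℕ, ∀ m ∈ I, ∀ i, (m i).natAbs ≤ M := by
    refine ⟨I.sup supNorm, fun m hm i => ?_⟩
    exact (Finset.le_sup (f := fun i => (m i).natAbs) (Finset.mem_univ i)).trans
      (Finset.le_sup (f := supNorm) hm)
  set n := 2 * M + 1 with hn
  set c : Fin d → ℤ := fun _ => (M : ℤ) with hc
  set w : (Fin d → Fin n) → A := patE n (shift (-c) x) with hw
  have hwn : w ∉ langE X₀ n := by
    rintro ⟨y, hy, hyw⟩
    have hmem : shift c y ∈ X₀ := hsh c y hy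
    refine hsubs (a := shift c y) ?_ hmem
    intro m hm
    have hb := hM m hm
    have key : shift c y m = x m := by
      have h1 := hyw (fun i => ⟨(m i + M).toNat, by have := hb i; omega⟩)
      have h2 : (fun i => (((m i + M).toNat : ℕ) : ℤ)) = c + m := by
        funext i
        have := hb i
        simp only [hc, Pi.add_apply]
        omega
      simp only [hw, patE, shift] at h1
      rw [h2] at h1
      simp only [shift]
      rw [h1]
      congr 1
      abel
    rw [key]
    exact (hu m hm).2
  have hlt : (langE X₀ n).ncard < Fintype.card A ^ (n ^ d) := by
    have h1 : (langE X₀ n).ncard < (Set.univ : Set ((Fin d → Fin n) → A)).ncard := by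
      apply Set.ncard_lt_ncard _ (Set.toFinite _)
      exact (Set.ssubset_univ_iff).2 fun h => hwn (h ▸ Set.mem_univ w)
    rwa [Set.ncard_univ, Nat.card_eq_fintype_card, Fintype.card_fun, Fintype.card_fun,
      Fintype.card_fin, Fintype.card_fin] at h1
  have hpos : 0 < (langE X₀ n).ncard := by
    rw [Set.ncard_pos]
    exact ⟨patE n x₀, x₀, hx₀, fun _ => rfl⟩
  have hbdd : BddBelow (Set.range fun n : {n : ℕ // 1 ≤ n} =>
      ((n.1 : ℝ) ^ d)⁻¹ * Real.log ((langE X₀ n.1).ncard)) := by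
    refine ⟨0, ?_⟩
    rintro _ ⟨n, rfl⟩
    exact mul_nonneg (by positivity) (Real.log_natCast_nonneg _)
  refine (ciInf_le hbdd ⟨n, by omega⟩).trans_lt ?_
  have hn' : (0 : ℝ) < (n : ℝ) ^ d := by positivity
  rw [inv_mul_lt_iff₀ hn']
  have := Real.log_lt_log (by exact_mod_cast hpos)
    (show ((langE X₀ n).ncard : ℝ) < (Fintype.card A : ℝ) ^ (n ^ d) by exact_mod_cast hlt)
  rw [Real.log_pow] at this
  exact_mod_cast this

lemma entropy_le_const (μ : Measure (Cfg d A)) [IsProbabilityMeasure μ] :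
    entropy μ ≤ Fintype.card ((Fin d → Fin 1) → A) := by
  refine (entropy_le μ 1 le_rfl).trans ?_
  simp only [Nat.cast_one, one_pow, inv_one, one_mul, HE]
  refine (Finset.sum_le_card_nsmul _ _ 1 fun w _ => ?_).trans (by simp)
  have := Real.negMulLog_le_one_sub_self (x := (μ (cylE 1 w)).toReal) ENNReal.toReal_nonneg
  have h2 : 0 ≤ (μ (cylE 1 w)).toReal := ENNReal.toReal_nonneg
  linarith

lemma integrable_phi {φ : Cfg d A → ℝ} (hφ : Continuous φ) (μ : Measure (Cfg d A))
    [IsFiniteMeasure μ] : Integrable φ μ :=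
  hφ.integrable_of_hasCompactSupport (HasCompactSupport.of_compactSpace φ)

lemma bddAbove_pressure {φ : Cfg d A → ℝ} (hφ : Continuous φ) (β : ℝ) :
    BddAbove { r | ∃ μ : Measure (Cfg d A), IsProbabilityMeasure μ ∧ Invariant μ ∧
      r = entropy μ + β * ∫ x, φ x ∂μ } := by
  obtain ⟨C, hC⟩ := isCompact_univ.exists_bound_of_continuousOn hφ.continuousOn
  refine ⟨Fintype.card ((Fin d → Fin 1) → A) + |β| * C, ?_⟩
  rintro _ ⟨μ, hp, -, rfl⟩
  have h1 := entropy_le_const μ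
  have h2 : ‖∫ x, φ x ∂μ‖ ≤ C := by
    simpa using norm_integral_le_of_norm_le_const (μ := μ) (f := φ) (C := C)
      (Eventually.of_forall fun x => hC x (Set.mem_univ x))
  have h3 : β * ∫ x, φ x ∂μ ≤ |β| * C := by
    refine (le_abs_self _).trans ?_
    rw [abs_mul]
    exact mul_le_mul_of_nonneg_left h2 (abs_nonneg _)
  linarith

lemma le_pressure {φ : Cfg d A → ℝ} (hφ : Continuous φ) (β : ℝ) (μ : Measure (Cfg d A))
    (hp : IsProbabilityMeasure μ) (hi : Invariant μ) :
    entropy μ + β * ∫ x, φ x ∂μ ≤ pressure φ β :=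
  le_csSup (bddAbove_pressure hφ β) ⟨μ, hp, hi, rfl⟩

lemma ES_nonempty [Nonempty A] {φ : Cfg d A → ℝ} (hφ : Continuous φ) (β : ℝ) :
    (ES φ β).Nonempty := by
  have hne : Nonempty {n : ℕ // 1 ≤ n} := ⟨⟨1, le_rfl⟩⟩
  set S : Set (ProbabilityMeasure (Cfg d A)) := {μ | Invariant (μ : Measure (Cfg d A))} with hS
  have hSc : IsClosed S := by
    have : S = ⋂ n : Fin d → ℤ, {μ : ProbabilityMeasure (Cfg d A) |
        μ.map (measurable_shift n).aemeasurable = μ} := by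
      ext μ
      simp only [hS, Set.mem_iInter, Set.mem_ofPred_eq, Invariant]
      refine forall_congr' fun n => ?_
      exact (Subtype.ext_iff (a1 := μ.map (measurable_shift n).aemeasurable) (a2 := μ)).symm
    rw [this]
    exact isClosed_iInter fun n =>
      isClosed_eq (ProbabilityMeasure.continuous_map (continuous_shift n)) continuous_id
  have hcyl : ∀ n (w : (Fin d → Fin n) → A), Continuous
      (fun μ : ProbabilityMeasure (Cfg d A) => ((μ : Measure (Cfg d A)) (cylE n w)).toReal) := by
    intro n w
    rw [continuous_iff_continuousAt]
    intro μ
    have := ProbabilityMeasure.tendsto_measure_of_isClopen_of_tendsto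
      (μs := fun ν : ProbabilityMeasure (Cfg d A) => ν) (L := 𝓝 μ) (μ := μ) tendsto_id
      (isClopen_cylE n w)
    exact (NNReal.continuous_coe.tendsto _).comp this
  have hint : Continuous (fun μ : ProbabilityMeasure (Cfg d A) =>
      ∫ x, φ x ∂(μ : Measure (Cfg d A))) := by
    have := ProbabilityMeasure.continuous_integral_boundedContinuousFunction
      (BoundedContinuousFunction.mkOfCompact ⟨φ, hφ⟩)
    exact this
  have husc : UpperSemicontinuous (fun μ : ProbabilityMeasure (Cfg d A) =>
      entropy (μ : Measure (Cfg d A)) + β * ∫ x, φ x ∂(μ : Measure (Cfg d A))) := by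
    refine UpperSemicontinuous.add ?_ (continuous_const.mul hint).upperSemicontinuous
    simp only [entropy_eq]
    refine upperSemicontinuous_ciInf (fun μ => bddBelow_ent _) fun n => ?_
    refine Continuous.upperSemicontinuous (continuous_const.mul ?_)
    exact continuous_finsetSum _ fun w _ => Real.continuous_negMulLog.comp (hcyl n.1 w)
  obtain ⟨μ, hμS, hmax⟩ := UpperSemicontinuousOn.exists_isMaxOn
    (s := S) ⟨⟨bern d A, inferInstance⟩, bern_invariant⟩ hSc.isCompact (husc.upperSemicontinuousOn S)
  refine ⟨μ, inferInstance, hμS, le_antisymm (le_pressure hφ β _ inferInstance hμS) ?_⟩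
  refine csSup_le ⟨_, μ, inferInstance, hμS, rfl⟩ ?_
  rintro _ ⟨ν, hp, hi, rfl⟩
  exact hmax (a := ⟨ν, hp⟩) hi

lemma pressure_anti {φ : Cfg d A → ℝ} [Nonempty A] (hφ : Continuous φ) (hle : ∀ x, φ x ≤ 0)
    {β β' : ℝ} (h : β ≤ β') : pressure φ β' ≤ pressure φ β := by
  obtain ⟨μ, hp, hi, he⟩ := ES_nonempty hφ β'
  rw [← he]
  refine le_trans ?_ (le_pressure hφ β μ hp hi)
  have : ∫ x, φ x ∂μ ≤ 0 := integral_nonpos hle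
  nlinarith

lemma cond_invariant {μ : Measure (Cfg d A)} [IsProbabilityMeasure μ] (hi : Invariant μ)
    {s : Set (Cfg d A)} (hs : MeasurableSet s) (hss : ∀ n, shift n ⁻¹' s = s) :
    Invariant (ProbabilityTheory.cond μ s) := by
  intro n
  rw [ProbabilityTheory.cond, Measure.map_smul]
  congr 1
  conv_lhs => rw [← hss n]
  rw [← Measure.restrict_map (measurable_shift n) hs, hi]

lemma integral_eq_zero_of_one {X₀ : Set (Cfg d A)} {φ : Cfg d A → ℝ} (hm : MeasurableSet X₀)
    (h0 : ∀ x ∈ X₀, φ x = 0) (μ : Measure (Cfg d A)) [IsProbabilityMeasure μ] (h : μ X₀ = 1) :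
    ∫ x, φ x ∂μ = 0 := by
  refine integral_eq_zero_of_ae ?_
  have : ∀ᵐ x ∂μ, x ∈ X₀ := (prob_compl_eq_zero_iff hm).2 h
  filter_upwards [this] with x hx using h0 x hx

lemma one_of_integral_nonneg {X₀ : Set (Cfg d A)} {φ : Cfg d A → ℝ} (hφ : Continuous φ)
    (hm : MeasurableSet X₀) (hle : ∀ x, φ x ≤ 0)
    (h1 : ∀ x ∉ X₀, φ x < 0) (μ : Measure (Cfg d A)) [IsProbabilityMeasure μ]
    (h : 0 ≤ ∫ x, φ x ∂μ) : μ X₀ = 1 := by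
  have h0 : ∫ x, -φ x ∂μ = 0 := by
    rw [integral_neg]
    have : ∫ x, φ x ∂μ ≤ 0 := integral_nonpos hle
    linarith
  rw [integral_eq_zero_iff_of_nonneg (fun x => neg_nonneg.2 (hle x)) (integrable_phi hφ μ).neg] at h0
  rw [← prob_compl_eq_zero_iff hm]
  refine measure_mono_null ?_ (ae_iff.1 h0)
  intro x hx
  have := h1 x hx
  simp only [Set.mem_ofPred_eq, Pi.zero_apply]
  intro h; linarith

/-- Key step: an equilibrium state charging `X₀` forces the pressure down to `h_top`. -/
lemma pressure_le_of_charge (hd : 1 ≤ d) {X₀ : Set (Cfg d A)} (hsub : IsSubshift X₀)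
    {φ : Cfg d A → ℝ} (hφ : Continuous φ) (h0 : ∀ x ∈ X₀, φ x = 0)
    {β : ℝ} {μ : Measure (Cfg d A)} (hμ : μ ∈ ES φ β) (hne : μ X₀ ≠ 0) :
    pressure φ β ≤ pressure φ 1 := by
  obtain ⟨hp, hi, he⟩ := hμ
  have hm : MeasurableSet X₀ := hsub.2.1.measurableSet
  have hss : ∀ n, shift n ⁻¹' X₀ = X₀ := by
    intro n
    ext x
    refine ⟨fun h => ?_, fun h => hsub.2.2 n x h⟩
    have := hsub.2.2 (-n) _ h
    have e : shift (-n) (shift n x) = x := by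
      funext m
      simp [shift]
    rwa [e] at this
  have hsupp : ∀ ν : Measure (Cfg d A), IsProbabilityMeasure ν → Invariant ν → ν X₀ = 1 →
      entropy ν ≤ pressure φ 1 := by
    intro ν hν hνi h
    have := le_pressure hφ 1 ν hν hνi
    rw [integral_eq_zero_of_one hm h0 ν h] at this
    linarith
  by_cases hone : μ X₀ = 1
  · have := hsupp μ hp hi hone
    rw [integral_eq_zero_of_one hm h0 μ hone] at he
    linarith
  have hnec : μ X₀ᶜ ≠ 0 := fun h => hone ((prob_compl_eq_zero_iff hm).1 h)
  set ν₀ := ProbabilityTheory.cond μ X₀ with hν₀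
  set ν₁ := ProbabilityTheory.cond μ X₀ᶜ with hν₁
  have p0 : IsProbabilityMeasure ν₀ := ProbabilityTheory.cond_isProbabilityMeasure hne
  have p1 : IsProbabilityMeasure ν₁ := ProbabilityTheory.cond_isProbabilityMeasure hnec
  have i0 : Invariant ν₀ := cond_invariant hi hm hss
  have i1 : Invariant ν₁ := cond_invariant hi hm.compl fun n => by rw [Set.preimage_compl, hss]
  set t := μ.real X₀ with ht
  have htpos : 0 < t := by
    rw [ht, measureReal_def]
    exact ENNReal.toReal_pos hne (measure_ne_top _ _)
  have ht1 : t ≤ 1 := measureReal_le_one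
  have htc : μ.real X₀ᶜ = 1 - t := by rw [probReal_compl_eq_one_sub hm]
  have htcpos : 0 < 1 - t := by
    rw [← htc, measureReal_def]
    exact ENNReal.toReal_pos hnec (measure_ne_top _ _)
  have hμeq : μ = (μ X₀) • ν₀ + (μ X₀ᶜ) • ν₁ := by
    rw [hν₀, hν₁, ProbabilityTheory.cond, ProbabilityTheory.cond, smul_smul, smul_smul,
      ENNReal.mul_inv_cancel hne (measure_ne_top _ _),
      ENNReal.mul_inv_cancel hnec (measure_ne_top _ _), one_smul, one_smul,
      Measure.restrict_add_restrict_compl hm]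
  have hreal : ∀ s, MeasurableSet s → μ.real s = t * ν₀.real s + (1 - t) * ν₁.real s := by
    intro s hs
    rw [← htc, ht]
    conv_lhs => rw [hμeq]
    rw [measureReal_def, Measure.add_apply, Measure.smul_apply, Measure.smul_apply, smul_eq_mul,
      smul_eq_mul, ENNReal.toReal_add (ENNReal.mul_ne_top (measure_ne_top _ _) (measure_ne_top _ _))
      (ENNReal.mul_ne_top (measure_ne_top _ _) (measure_ne_top _ _)), ENNReal.toReal_mul,
      ENNReal.toReal_mul]
    rfl
  have hint : ∫ x, φ x ∂μ = t * ∫ x, φ x ∂ν₀ + (1 - t) * ∫ x, φ x ∂ν₁ := by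
    rw [← htc, ht]
    conv_lhs => rw [hμeq]
    rw [integral_add_measure ((integrable_phi hφ ν₀).smul_measure (measure_ne_top _ _))
      ((integrable_phi hφ ν₁).smul_measure (measure_ne_top _ _)), integral_smul_measure,
      integral_smul_measure]
    rfl
  have hν₀X : ν₀ X₀ = 1 := ProbabilityTheory.cond_apply_self hne (measure_ne_top _ _)
  have hz := integral_eq_zero_of_one hm h0 ν₀ hν₀X
  have hmix := entropy_mix hd μ ν₀ ν₁ i0 i1 t htpos.le ht1 hreal
  have b0 := hsupp ν₀ p0 i0 hν₀X
  have b1 := le_pressure hφ β ν₁ p1 i1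
  rw [hint, hz] at he
  have b1' := mul_le_mul_of_nonneg_left b1 htcpos.le
  have b0' := mul_le_mul_of_nonneg_left b0 htpos.le
  have : t * pressure φ β ≤ t * pressure φ 1 := by nlinarith
  exact le_of_mul_le_mul_left this htpos

end Aux



/-- **Proposition 3.5.** If `φ` vanishes on the proper subshift `X₀`, is
negative off `X₀`, `p_φ(1) = h_top(X₀)`, and `ES(φ)` is exactly the set of measures of
maximal entropy of `X₀`, then there is `β_c ∈ (0,1]` at which `φ` has a freezing phase
transition; for `β > β_c`, `ES(βφ)` is the set of measures of maximal entropy on `X₀`,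
while for `β < β_c`, `μ(X₀) = 0` for all `μ ∈ ES(βφ)`. -/
theorem statement4 (d : ℕ) (hd : 1 ≤ d) (A : Type) [Fintype A] [TopologicalSpace A]
    [DiscreteTopology A] [MeasurableSpace A] [BorelSpace A]
    (X₀ : Set (Cfg d A)) (hsub : IsSubshift X₀) (hproper : X₀ ≠ Set.univ)
    (φ : Cfg d A → ℝ) (hφ : Continuous φ)
    (h1 : (∀ x ∈ X₀, φ x = 0) ∧ ∀ x ∉ X₀, φ x < 0)
    (h2 : pressure φ 1 = topEnt X₀)
    (h3 : ES φ 1 = { μ | IsMME X₀ μ }) :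
    ∃ βc : ℝ, 0 < βc ∧ βc ≤ 1 ∧ FreezingPT φ βc ∧
      (∀ β : ℝ, βc < β → ES φ β = { μ | IsMME X₀ μ }) ∧
      (∀ β : ℝ, β < βc → ∀ μ ∈ ES φ β, μ X₀ = 0) := by
  have hm : MeasurableSet X₀ := hsub.2.1.measurableSet
  have hA : Nonempty A := ⟨hsub.1.some 0⟩
  have hle : ∀ x, φ x ≤ 0 := fun x => by
    by_cases hx : x ∈ X₀
    · exact (h1.1 x hx).le
    · exact (h1.2 x hx).le
  obtain ⟨μ₁, hμ₁⟩ := ES_nonempty hφ 1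
  rw [h3] at hμ₁
  have hμ₁' : IsMME X₀ μ₁ := hμ₁
  have hzero : ∀ μ, IsMME X₀ μ → ∫ x, φ x ∂μ = 0 := by
    rintro μ ⟨hp, -, h, -⟩
    exact integral_eq_zero_of_one hm h1.1 μ h
  have hge : ∀ β, topEnt X₀ ≤ pressure φ β := by
    intro β
    have := le_pressure hφ β μ₁ hμ₁'.1 hμ₁'.2.1
    rw [hzero μ₁ hμ₁', hμ₁'.2.2.2] at this
    linarith
  have hlog := topEnt_lt X₀ hsub hproper
  set S : Set ℝ := {β | pressure φ β = topEnt X₀} with hS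
  have h1S : (1 : ℝ) ∈ S := h2
  set c := ∫ x, φ x ∂(bern d A) with hc
  have hc0 : c ≤ 0 := integral_nonpos hle
  set δ := Real.log (Fintype.card A) - topEnt X₀ with hδ
  have hδ0 : 0 < δ := by rw [hδ]; linarith
  have hlb : ∀ β ∈ S, δ / (1 - c) ≤ β := by
    intro β hβ
    have hβ' : pressure φ β = topEnt X₀ := hβ
    have h := le_pressure hφ β (bern d A) inferInstance bern_invariant
    rw [bern_entropy, hβ', ← hc] at h
    have h5 : δ ≤ β * (-c) := by rw [hδ]; linarith
    have hβ0 : 0 < β := by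
      by_contra hcon
      push Not at hcon
      nlinarith
    rw [div_le_iff₀ (by linarith)]
    nlinarith
  have hbdd : BddBelow S := ⟨_, hlb⟩
  have hup : ∀ β, sInf S < β → ES φ β = { μ | IsMME X₀ μ } := by
    intro β hβ
    obtain ⟨β', hβ', hlt⟩ := exists_lt_of_csInf_lt ⟨1, h1S⟩ hβ
    have hβ'' : pressure φ β' = topEnt X₀ := hβ'
    have hpβ : pressure φ β = topEnt X₀ :=
      le_antisymm ((pressure_anti hφ hle hlt.le).trans hβ''.le) (hge β)
    ext μ
    constructor
    · rintro ⟨hp, hi, he⟩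
      have h5 := le_pressure hφ β' μ hp hi
      rw [hpβ] at he
      rw [hβ''] at h5
      have h6 : 0 ≤ ∫ x, φ x ∂μ := by
        by_contra hcon
        push Not at hcon
        nlinarith
      have h7 := one_of_integral_nonneg hφ hm hle h1.2 μ h6
      refine ⟨hp, hi, h7, ?_⟩
      rw [integral_eq_zero_of_one hm h1.1 μ h7] at he
      linarith
    · intro hμ
      have hμ' : IsMME X₀ μ := hμ
      refine ⟨hμ'.1, hμ'.2.1, ?_⟩
      rw [hzero μ hμ', hμ'.2.2.2, hpβ]
      ring
  have hdown : ∀ β, β < sInf S → ∀ μ ∈ ES φ β, μ X₀ = 0 := by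
    intro β hβ μ hμ
    by_contra hne
    have h5 := pressure_le_of_charge hd hsub hφ h1.1 hμ hne
    rw [h2] at h5
    have : β ∈ S := le_antisymm h5 (hge β)
    exact absurd (csInf_le hbdd this) (not_le.2 hβ)
  refine ⟨sInf S, ?_, csInf_le hbdd h1S, ⟨?_, ?_⟩, hup, hdown⟩
  · exact lt_of_lt_of_le (div_pos hδ0 (by linarith)) (le_csInf ⟨1, h1S⟩ hlb)
  · intro β β' h h'
    rw [hup β h, hup β' h']
  · intro β β' h h' heq
    have h5 : μ₁ ∈ ES φ β := by
      rw [heq, hup β' h']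
      exact hμ₁
    have h6 := hdown β h μ₁ h5
    rw [hμ₁'.2.2.1] at h6
    exact one_ne_zero h6

end Freezing
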